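/- Let G be a finite connected simple graph that admits a star spanning tree T_s with center v, and let T be a spanning tree of G with no interbranch cycle-edges (Δ_T = ∅). Then ∩_G(T) = Σ_{w ∈ N(v)} ∩_{G_w}(T_w), where for each neighbor w of v in T (rooted at v), T_w is the principal subtree with respect to w and G_w is the subgraph of G spanned by the vertices of T_w. -/

import Mathlib

open SimpleGraph

/-- The set of edges lying on some path (in a tree: the unique path) between `x` and `y`
in the graph `T`. -/
def pathEdges {V : Type*} (T : SimpleGraph V) (x y : V) : Set (Sym2 V) :=
  {f | ∃ p : T.Walk x y, p.IsPath ∧ f ∈ p.edges}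

/-- The edge set of the tree-cycle induced (in the spanning tree `T`) by the cycle-edge `e`:
the edge `e` itself together with the edges of the (unique) path in `T` between
the endpoints of `e`. -/
def cycEdges {V : Type*} (T : SimpleGraph V) (e : Sym2 V) : Set (Sym2 V) :=
  insert e {f | ∃ x y, e = s(x, y) ∧ f ∈ pathEdges T x y}

/-- The vertex set of the tree-cycle induced (in the spanning tree `T`) by the
cycle-edge `e`. -/
def cycVerts {V : Type*} (T : SimpleGraph V) (e : Sym2 V) : Set V :=
  {v | ∃ x y, e = s(x, y) ∧ ∃ p : T.Walk x y, p.IsPath ∧ v ∈ p.support}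

/-- Two tree-cycles (induced by the cycle-edges `e` and `f`) have non-empty intersection:
some edge of `T` belongs to both of them. -/
def cyclesIntersect {V : Type*} (T : SimpleGraph V) (e f : Sym2 V) : Prop :=
  (cycEdges T e ∩ cycEdges T f ∩ T.edgeSet).Nonempty

/-- The cycle intersection number `∩_T(c)` of the tree-cycle `c` induced by the
cycle-edge `e`: the number of tree-cycles distinct from `c` whose intersection with `c`
is non-empty. -/
noncomputable def cycleInterNum {V : Type*} (G T : SimpleGraph V) (e : Sym2 V) : ℕ :=
  {f | f ∈ G.edgeSet \ T.edgeSet ∧ f ≠ e ∧ cyclesIntersect T e f}.ncard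

/-- The tree intersection number `∩_G(T)`: the number of unordered pairs of distinct
tree-cycles of `T` whose intersection is non-empty. -/
noncomputable def treeInterNum {V : Type*} (G T : SimpleGraph V) : ℕ :=
  {p : Sym2 (Sym2 V) | ∃ e f : Sym2 V, p = s(e, f) ∧ e ≠ f ∧
    e ∈ G.edgeSet \ T.edgeSet ∧ f ∈ G.edgeSet \ T.edgeSet ∧ cyclesIntersect T e f}.ncard

/-- `T` is a star spanning tree of `G` with center `v`. -/
def IsStarSpanningTree {V : Type*} (G T : SimpleGraph V) (v : V) : Prop :=
  T ≤ G ∧ T.IsTree ∧ ∀ u, u ≠ v → T.Adj v u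

/-- `closest-point-set(w, c)`: the set of vertices outside the tree-cycle `c` (induced by
the cycle-edge `e`) whose closest point on `c` (with respect to distance in `T`) is `w`. -/
def closestPointSet {V : Type*} (T : SimpleGraph V) (e : Sym2 V) (w : V) : Set V :=
  {v | v ∉ cycVerts T e ∧ ∀ u ∈ cycVerts T e, T.dist v w ≤ T.dist v u}

/-- The set of interbranch cycle-edges of the spanning tree `T` (relative to the center
`v` of a star spanning tree): cycle-edges `e = (u, w)` such that the closest point of
`v` on the tree-cycle induced by `e` is neither `u` nor `w`. -/
def interbranchSet {V : Type*} (G T : SimpleGraph V) (v : V) : Set (Sym2 V) :=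
  {e | e ∈ G.edgeSet \ T.edgeSet ∧
    ∀ w ∈ cycVerts T e, (∀ u ∈ cycVerts T e, T.dist v w ≤ T.dist v u) → w ∉ e}

/-- Vertex set of the principal subtree of the rooted tree `(T, v)` with respect to the
neighbor `w` of `v`: the vertex `v` together with all vertices `u` such that `w` lies on
the (unique) path in `T` from `v` to `u`. -/
def branchVerts {V : Type*} (T : SimpleGraph V) (v w : V) : Set V :=
  insert v {u | ∃ p : T.Walk v u, p.IsPath ∧ w ∈ p.support}

/-- The subgraph of `G` spanned by the vertex set `s` (on the same ambient vertex type):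
all edges of `G` with both endpoints in `s`. -/
def spannedSubgraph {V : Type*} (G : SimpleGraph V) (s : Set V) : SimpleGraph V :=
  SimpleGraph.fromEdgeSet {f | f ∈ G.edgeSet ∧ ∀ x ∈ f, x ∈ s}

/-!
Deleting `v` from a graph splits it into components, and the branch at a neighbour `w` of `v` is
`v` together with the component of `w`. A path visits `v` at most once, so it cannot leave a branch
and come back: a tree-cycle whose cycle-edge joins two vertices of a branch stays in that branch.
Since no cycle-edge is interbranch, every tree-cycle through `v` has `v` as an end of its
cycle-edge, so every cycle-edge joins two vertices of a single branch. Finally, distinct branches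
share only `v`, hence no edge, so tree-cycles in distinct branches do not intersect.
-/

section

variable {V : Type*} {G T : SimpleGraph V} {v w w' x y : V} {s : Set V} {e f : Sym2 V}

theorem mem_branchVerts_iff_exists_walk (hvw : T.Adj v w) :
    x ∈ branchVerts T v w ↔ x = v ∨ ∃ q : T.Walk w x, v ∉ q.support := by
  classical
  refine or_congr_right ⟨?_, ?_⟩
  · rintro ⟨p, hp, hw⟩
    refine ⟨p.dropUntil w hw, fun hv ↦ ?_⟩
    rw [← p.take_spec hw] at hp
    exact hp.ne_of_mem_support_of_append hvw.ne (Walk.start_mem_support _) hv rfl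
  · rintro ⟨q, hv⟩
    have hv' : v ∉ q.bypass.support := fun h ↦ hv (q.support_bypass_subset_support h)
    exact ⟨.cons hvw q.bypass, q.bypass_isPath.cons hv', by simp⟩

theorem mem_branchVerts_of_walk (hvw : T.Adj v w) (hx : x ∈ branchVerts T v w) (p : T.Walk x y)
    (hv : v ∉ p.support) : y ∈ branchVerts T v w := by
  rw [mem_branchVerts_iff_exists_walk hvw] at hx ⊢
  obtain rfl | ⟨q, hq⟩ := hx
  · exact absurd p.start_mem_support hv
  · exact .inr ⟨q.append p, by simp [Walk.mem_support_append_iff, hq, hv]⟩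

theorem exists_adj_mem_branchVerts (hT : T.Preconnected) (hxv : x ≠ v) :
    ∃ w, T.Adj v w ∧ x ∈ branchVerts T v w := by
  obtain ⟨p, hp⟩ := hT.exists_isPath v x
  cases p with
  | nil => exact absurd rfl hxv
  | cons h q => exact ⟨_, h, .inr ⟨_, hp, by simp⟩⟩

theorem eq_of_mem_branchVerts (hT : T.IsAcyclic) (hw : T.Adj v w) (hw' : T.Adj v w')
    (hx : x ∈ branchVerts T v w) (hx' : x ∈ branchVerts T v w') (hxv : x ≠ v) : w = w' := by
  obtain ⟨p, hp, hwp⟩ := hx.resolve_left hxv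
  obtain ⟨q, hq, hwq⟩ := hx'.resolve_left hxv
  obtain rfl : p = q := congrArg Subtype.val ((hT.subsingleton_path v x).elim ⟨p, hp⟩ ⟨q, hq⟩)
  exact (hT.eq_snd_of_adj_start hp hw hwp).trans (hT.eq_snd_of_adj_start hp hw' hwq).symm

theorem eq_of_mem_sym2_branchVerts (hT : T.IsAcyclic) (hw : T.Adj v w) (hw' : T.Adj v w')
    (hd : ¬e.IsDiag) (he : e ∈ (branchVerts T v w).sym2) (he' : e ∈ (branchVerts T v w').sym2) :
    w = w' := by
  induction e with
  | h x y =>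
    obtain rfl | hxv := eq_or_ne x v
    · exact eq_of_mem_branchVerts hT hw hw' he.2 he'.2 (Ne.symm hd)
    · exact eq_of_mem_branchVerts hT hw hw' he.1 he'.1 hxv

theorem exists_adj_mem_sym2_branchVerts (hT : T.Preconnected) (hxy : x ≠ y) (p : T.Walk x y)
    (hv : v ∈ p.support → v ∈ s(x, y)) :
    ∃ w, T.Adj v w ∧ s(x, y) ∈ (branchVerts T v w).sym2 := by
  by_cases hvp : v ∈ p.support
  · obtain rfl | rfl := Sym2.mem_iff.1 (hv hvp)
    · obtain ⟨w, hw, hy⟩ := exists_adj_mem_branchVerts hT hxy.symm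
      exact ⟨w, hw, .inl rfl, hy⟩
    · obtain ⟨w, hw, hx⟩ := exists_adj_mem_branchVerts hT hxy
      exact ⟨w, hw, hx, .inl rfl⟩
  · have hxv : x ≠ v := fun h ↦ hvp (h ▸ p.start_mem_support)
    obtain ⟨w, hw, hx⟩ := exists_adj_mem_branchVerts hT hxv
    exact ⟨w, hw, hx, mem_branchVerts_of_walk hw hx p hvp⟩

theorem mem_of_mem_cycVerts_of_notMem_interbranchSet (hT : T.Connected)
    (he : e ∈ G.edgeSet \ T.edgeSet) (hib : e ∉ interbranchSet G T v) (hv : v ∈ cycVerts T e) :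
    v ∈ e := by
  simp only [interbranchSet, Set.mem_ofPred_eq, not_and, not_forall, not_not] at hib
  obtain ⟨z, -, hmin, hze⟩ := hib he
  have hvz : T.dist v z = 0 := by simpa using hmin v hv
  rwa [hT.dist_eq_zero_iff.1 hvz]

theorem exists_adj_mem_sym2_branchVerts_of_notMem_interbranchSet (hT : T.Connected)
    (he : e ∈ G.edgeSet \ T.edgeSet) (hib : e ∉ interbranchSet G T v) :
    ∃ w, T.Adj v w ∧ e ∈ (branchVerts T v w).sym2 := by
  induction e with
  | h x y =>
    obtain ⟨p, hp⟩ := hT.exists_isPath x y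
    exact exists_adj_mem_sym2_branchVerts hT.preconnected (G.ne_of_adj he.1) p fun hv ↦
      mem_of_mem_cycVerts_of_notMem_interbranchSet hT he hib ⟨x, y, rfl, p, hp, hv⟩

/-- All-path convexity: every path of `T` between two vertices of `s` stays in `s`. This is what
makes tree-cycles restrict well to spanned subgraphs. -/
def IsPathConvex (T : SimpleGraph V) (s : Set V) : Prop :=
  ∀ ⦃x⦄, x ∈ s → ∀ ⦃y⦄, y ∈ s → ∀ p : T.Walk x y, p.IsPath → ∀ z ∈ p.support, z ∈ s

theorem isPathConvex_branchVerts (hvw : T.Adj v w) : IsPathConvex T (branchVerts T v w) := by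
  classical
  intro x hx y hy p hp z hz
  obtain rfl | hzv := eq_or_ne z v
  · exact .inl rfl
  by_cases hv : v ∈ (p.takeUntil z hz).support
  · rw [← p.take_spec hz] at hp
    have hv' : v ∉ (p.dropUntil z hz).support := fun h ↦
      hp.ne_of_mem_support_of_append hzv.symm hv h rfl
    exact mem_branchVerts_of_walk hvw hy (p.dropUntil z hz).reverse (by simpa using hv')
  · exact mem_branchVerts_of_walk hvw hx _ hv

theorem IsPathConvex.cycEdges_subset (hs : IsPathConvex T s) (he : e ∈ s.sym2) :
    cycEdges T e ⊆ s.sym2 := by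
  rintro g (rfl | ⟨x, y, rfl, p, hp, hg⟩)
  · exact he
  · exact Set.mem_sym2_iff_subset.2 fun z hz ↦
      hs he.1 he.2 p hp z (Walk.mem_support_of_mem_edges hg hz)

theorem edgeSet_spannedSubgraph (G : SimpleGraph V) (s : Set V) :
    (spannedSubgraph G s).edgeSet = G.edgeSet ∩ s.sym2 := by
  ext e
  simp only [spannedSubgraph, edgeSet_fromEdgeSet, Set.mem_sdiff, Set.mem_ofPred_eq,
    Set.mem_inter_iff, Set.mem_sym2_iff_subset]
  exact and_iff_left_of_imp fun h ↦ G.not_isDiag_of_mem_edgeSet h.1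

theorem spannedSubgraph_le (G : SimpleGraph V) (s : Set V) : spannedSubgraph G s ≤ G := by
  rw [← edgeSet_subset_edgeSet, edgeSet_spannedSubgraph]
  exact Set.inter_subset_left

theorem IsPathConvex.cycEdges_spannedSubgraph (hs : IsPathConvex T s) (he : e ∈ s.sym2) :
    cycEdges (spannedSubgraph T s) e = cycEdges T e := by
  refine Set.Subset.antisymm ?_ ?_
  · rintro g (rfl | ⟨x, y, rfl, p, hp, hg⟩)
    · exact .inl rfl
    · have hle := spannedSubgraph_le T s
      exact .inr ⟨x, y, rfl, p.mapLe hle, hp.mapLe hle, by rwa [Walk.edges_mapLe_eq_edges]⟩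
  · rintro g (rfl | ⟨x, y, rfl, p, hp, hg⟩)
    · exact .inl rfl
    · have hedges : ∀ f ∈ p.edges, f ∈ (spannedSubgraph T s).edgeSet := fun f hf ↦ by
        rw [edgeSet_spannedSubgraph]
        exact ⟨p.edges_subset_edgeSet hf, hs.cycEdges_subset he (.inr ⟨x, y, rfl, p, hp, hf⟩)⟩
      exact .inr ⟨x, y, rfl, p.transfer _ hedges, hp.transfer hedges, by rwa [Walk.edges_transfer]⟩

theorem IsPathConvex.cyclesIntersect_spannedSubgraph_iff (hs : IsPathConvex T s)
    (he : e ∈ s.sym2) (hf : f ∈ s.sym2) :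
    cyclesIntersect (spannedSubgraph T s) e f ↔ cyclesIntersect T e f := by
  have hsub : cycEdges T e ∩ cycEdges T f ⊆ s.sym2 :=
    Set.inter_subset_left.trans (hs.cycEdges_subset he)
  rw [cyclesIntersect, cyclesIntersect, hs.cycEdges_spannedSubgraph he,
    hs.cycEdges_spannedSubgraph hf, edgeSet_spannedSubgraph, Set.inter_comm T.edgeSet,
    ← Set.inter_assoc, Set.inter_eq_left.2 hsub]

theorem cyclesIntersect_comm : cyclesIntersect T e f ↔ cyclesIntersect T f e := by
  rw [cyclesIntersect, cyclesIntersect, Set.inter_comm (cycEdges T e)]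

/-- The unordered pairs of distinct tree-cycles of `T` in `G` with non-empty intersection, each
tree-cycle being represented by its cycle-edge; `treeInterNum G T` is the cardinality of this
set. -/
def intersectingPairs (G T : SimpleGraph V) : Set (Sym2 (Sym2 V)) :=
  {p | ∃ e f : Sym2 V, p = s(e, f) ∧ e ≠ f ∧
    e ∈ G.edgeSet \ T.edgeSet ∧ f ∈ G.edgeSet \ T.edgeSet ∧ cyclesIntersect T e f}

theorem mk_mem_intersectingPairs_iff :
    s(e, f) ∈ intersectingPairs G T ↔
      e ≠ f ∧ e ∈ G.edgeSet \ T.edgeSet ∧ f ∈ G.edgeSet \ T.edgeSet ∧ cyclesIntersect T e f := by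
  refine ⟨?_, fun h ↦ ⟨e, f, rfl, h⟩⟩
  rintro ⟨e', f', hp, hne, he, hf, hef⟩
  obtain ⟨rfl, rfl⟩ | ⟨rfl, rfl⟩ := Sym2.eq_iff.1 hp
  · exact ⟨hne, he, hf, hef⟩
  · exact ⟨hne.symm, hf, he, cyclesIntersect_comm.1 hef⟩

theorem IsPathConvex.intersectingPairs_spannedSubgraph (hs : IsPathConvex T s) :
    intersectingPairs (spannedSubgraph G s) (spannedSubgraph T s) =
      intersectingPairs G T ∩ s.sym2.sym2 := by
  ext p
  induction p with
  | h e f =>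
    simp only [mk_mem_intersectingPairs_iff, edgeSet_spannedSubgraph,
      ← Set.inter_sdiff_distrib_right, Set.mem_inter_iff, Set.mk_mem_sym2_iff]
    constructor
    · rintro ⟨hne, ⟨he, hes⟩, ⟨hf, hfs⟩, hef⟩
      exact ⟨⟨hne, he, hf, (hs.cyclesIntersect_spannedSubgraph_iff hes hfs).1 hef⟩, hes, hfs⟩
    · rintro ⟨⟨hne, he, hf, hef⟩, hes, hfs⟩
      exact ⟨hne, ⟨he, hes⟩, ⟨hf, hfs⟩, (hs.cyclesIntersect_spannedSubgraph_iff hes hfs).2 hef⟩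

theorem exists_adj_mem_sym2_sym2_branchVerts (hT : T.IsTree) (hib : interbranchSet G T v = ∅)
    {p : Sym2 (Sym2 V)} (hp : p ∈ intersectingPairs G T) :
    ∃ w, T.Adj v w ∧ p ∈ (branchVerts T v w).sym2.sym2 := by
  have hbranch : ∀ e ∈ G.edgeSet \ T.edgeSet, ∃ w, T.Adj v w ∧ e ∈ (branchVerts T v w).sym2 :=
    fun e he ↦
      exists_adj_mem_sym2_branchVerts_of_notMem_interbranchSet hT.connected he (by simp [hib])
  obtain ⟨e, f, rfl, -, he, hf, g, ⟨hge, hgf⟩, hgT⟩ := hp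
  obtain ⟨w, hw, hew⟩ := hbranch e he
  obtain ⟨w', hw', hfw⟩ := hbranch f hf
  have hgw := (isPathConvex_branchVerts hw).cycEdges_subset hew hge
  have hgw' := (isPathConvex_branchVerts hw').cycEdges_subset hfw hgf
  obtain rfl : w = w' :=
    eq_of_mem_sym2_branchVerts hT.isAcyclic hw hw' (T.not_isDiag_of_mem_edgeSet hgT) hgw hgw'
  exact ⟨w, hw, hew, hfw⟩

theorem intersectingPairs_eq_biUnion (hT : T.IsTree) (hib : interbranchSet G T v = ∅) :
    intersectingPairs G T = ⋃ w ∈ T.neighborSet v,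
      intersectingPairs (spannedSubgraph G (branchVerts T v w))
        (spannedSubgraph T (branchVerts T v w)) := by
  calc
    intersectingPairs G T
      = intersectingPairs G T ∩ ⋃ w ∈ T.neighborSet v, (branchVerts T v w).sym2.sym2 :=
        (Set.inter_eq_left.2 fun p hp ↦ by
          simpa using exists_adj_mem_sym2_sym2_branchVerts hT hib hp).symm
    _ = ⋃ w ∈ T.neighborSet v, intersectingPairs G T ∩ (branchVerts T v w).sym2.sym2 :=
        Set.inter_iUnion₂ _ _
    _ = _ := Set.iUnion₂_congr fun _ hw ↦
        (isPathConvex_branchVerts hw).intersectingPairs_spannedSubgraph.symm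

theorem pairwiseDisjoint_intersectingPairs_branchVerts (hT : T.IsAcyclic) :
    (T.neighborSet v).PairwiseDisjoint fun w ↦
      intersectingPairs (spannedSubgraph G (branchVerts T v w))
        (spannedSubgraph T (branchVerts T v w)) := by
  intro w hw w' hw' hne
  rw [Function.onFun, (isPathConvex_branchVerts hw).intersectingPairs_spannedSubgraph,
    (isPathConvex_branchVerts hw').intersectingPairs_spannedSubgraph]
  refine Set.disjoint_left.2 ?_
  rintro _ ⟨⟨e, f, rfl, -, he, -⟩, hew, -⟩ ⟨-, hew', -⟩
  exact hne (eq_of_mem_sym2_branchVerts hT hw hw' (G.not_isDiag_of_mem_edgeSet he.1) hew hew')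

theorem stmt_18_general [Fintype (T.neighborSet v)] (hT : T.IsTree)
    (hib : interbranchSet G T v = ∅) (hfin : (intersectingPairs G T).Finite) :
    treeInterNum G T = ∑ w ∈ T.neighborFinset v,
      treeInterNum (spannedSubgraph G (branchVerts T v w))
        (spannedSubgraph T (branchVerts T v w)) := by
  have hbranch : ∀ w ∈ T.neighborSet v, (intersectingPairs (spannedSubgraph G (branchVerts T v w))
      (spannedSubgraph T (branchVerts T v w))).Finite := fun w hw ↦ by
    rw [(isPathConvex_branchVerts hw).intersectingPairs_spannedSubgraph]
    exact hfin.inter_of_left _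
  change (intersectingPairs G T).ncard = _
  rw [intersectingPairs_eq_biUnion hT hib, (T.neighborSet v).toFinite.ncard_biUnion hbranch
    (pairwiseDisjoint_intersectingPairs_branchVerts hT.isAcyclic), ← coe_neighborFinset,
    finsum_mem_coe_finset]
  rfl

end

/-- If a connected graph `G` admits a star spanning tree `T_s` with center
`v`, and `T` is a spanning tree with no interbranch cycle-edges (`Δ_T = ∅`), then
`∩_G(T) = Σ_{w ∈ N_T(v)} ∩_{G_w}(T_w)`, where `T_w` is the principal subtree of `T`
(rooted at `v`) with respect to `w` and `G_w` is the subgraph of `G` spanned by the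
vertices of `T_w`. -/
theorem stmt_18 {V : Type*} [Fintype V] [DecidableEq V] (G Ts T : SimpleGraph V)
    [DecidableRel T.Adj]
    (hG : G.Connected) (v : V) (hTs : IsStarSpanningTree G Ts v)
    (hle : T ≤ G) (hT : T.IsTree)
    (hib : interbranchSet G T v = ∅) :
    treeInterNum G T = ∑ w ∈ T.neighborFinset v,
      treeInterNum (spannedSubgraph G (branchVerts T v w))
        (spannedSubgraph T (branchVerts T v w)) := by
  exact stmt_18_general hT hib (Set.toFinite _)
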